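/- Fix p > 1, q with 1/p + 1/q = 1, t > 0, and β ∈ [1/2, 1). Set y_0 = t(1−β)^{1/p}, y_1 = t(1−β)^{−1/q}, and x(y) = (β^{−1} − 1)^{1/q}(y_1 − y). Then for each y ∈ (0, y_0) there exists a unique ỹ ∈ (y_0, y_1) such that y^p + x(y)^p = ỹ^p + x(ỹ)^p. -/

import Mathlib

/-!
On `(-∞, y₁]` the quantity `z ^ p + x z ^ p` equals `z ^ p + k ^ (p - 1) * (y₁ - z) ^ p`, where
`k = β⁻¹ - 1`. The derivative of the latter on `[0, y₁]` has the sign of `z - k * (y₁ - z)`, which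
vanishes exactly at `z = y₀`, so the function falls strictly on `[0, y₀]` and rises strictly on
`[y₀, y₁]`. For `β ≥ 1 / 2` we have `k ≤ 1`, which makes its value at `y₁` at least its value at
`0`; hence the rising branch takes each value of the falling branch on `(0, y₀)` exactly once.
-/

open Set

theorem existsUnique_mem_Ioo_eq_of_strictAntiOn_of_strictMonoOn {α δ : Type*}
    [ConditionallyCompleteLinearOrder α] [TopologicalSpace α] [OrderTopology α] [DenselyOrdered α]
    [LinearOrder δ] [TopologicalSpace δ] [OrderClosedTopology δ] {f : α → δ} {a m b y : α}
    (hanti : StrictAntiOn f (Icc a m)) (hmono : StrictMonoOn f (Icc m b))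
    (hcont : ContinuousOn f (Icc m b)) (hmb : m ≤ b) (hab : f a ≤ f b) (hy : y ∈ Ioo a m) :
    ∃! w, w ∈ Ioo m b ∧ f y = f w := by
  have ham : a ≤ m := (hy.1.trans hy.2).le
  have hy' : y ∈ Icc a m := Ioo_subset_Icc_self hy
  have hlow : f m < f y := hanti hy' (right_mem_Icc.2 ham) hy.2
  have hhigh : f y < f b := (hanti (left_mem_Icc.2 ham) hy' hy.1).trans_le hab
  obtain ⟨w, hw, hfw⟩ := intermediate_value_Ioo hmb hcont ⟨hlow, hhigh⟩
  refine ⟨w, ⟨hw, hfw.symm⟩, fun v ⟨hv, hfv⟩ => ?_⟩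
  exact hmono.injOn (Ioo_subset_Icc_self hv) (Ioo_subset_Icc_self hw) (hfv.symm.trans hfw.symm)

section RpowAddMulSubRpow

variable {p c s m : ℝ}

theorem hasDerivAt_rpow_add_mul_sub_rpow (hp : 1 ≤ p) (c s z : ℝ) :
    HasDerivAt (fun z : ℝ => z ^ p + c * (s - z) ^ p)
      (p * (z ^ (p - 1) - c * (s - z) ^ (p - 1))) z := by
  have hleft : HasDerivAt (fun z : ℝ => z ^ p) (p * z ^ (p - 1)) z :=
    Real.hasDerivAt_rpow_const (Or.inr hp)
  have hright : HasDerivAt (fun z : ℝ => (s - z) ^ p) (-1 * p * (s - z) ^ (p - 1)) z :=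
    ((hasDerivAt_id z).const_sub s).rpow_const (Or.inr hp)
  exact (hleft.add (hright.const_mul c)).congr_deriv (by ring)

theorem continuous_rpow_add_mul_sub_rpow (hp : 0 ≤ p) (c s : ℝ) :
    Continuous fun z : ℝ => z ^ p + c * (s - z) ^ p :=
  (Real.continuous_rpow_const hp).add
    (((Real.continuous_rpow_const hp).comp (continuous_sub_left s)).const_mul c)

theorem strictAntiOn_rpow_add_mul_sub_rpow (hp : 1 < p) (hc : 0 ≤ c) (hms : m ≤ s)
    (hcrit : m ^ (p - 1) = c * (s - m) ^ (p - 1)) :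
    StrictAntiOn (fun z : ℝ => z ^ p + c * (s - z) ^ p) (Icc 0 m) := by
  refine strictAntiOn_of_deriv_neg (convex_Icc 0 m)
    (continuous_rpow_add_mul_sub_rpow (by linarith) c s).continuousOn fun z hz => ?_
  rw [interior_Icc] at hz
  have hlt : z ^ (p - 1) < c * (s - z) ^ (p - 1) := calc
    z ^ (p - 1) < m ^ (p - 1) := Real.rpow_lt_rpow hz.1.le hz.2 (sub_pos.2 hp)
    _ = c * (s - m) ^ (p - 1) := hcrit
    _ ≤ c * (s - z) ^ (p - 1) := mul_le_mul_of_nonneg_left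
      (Real.rpow_le_rpow (sub_nonneg.2 hms) (sub_le_sub_left hz.2.le s) (sub_pos.2 hp).le) hc
  rw [(hasDerivAt_rpow_add_mul_sub_rpow hp.le c s z).deriv]
  exact mul_neg_of_pos_of_neg (by linarith) (sub_neg.2 hlt)

theorem strictMonoOn_rpow_add_mul_sub_rpow (hp : 1 < p) (hc : 0 ≤ c) (hm : 0 ≤ m)
    (hcrit : m ^ (p - 1) = c * (s - m) ^ (p - 1)) :
    StrictMonoOn (fun z : ℝ => z ^ p + c * (s - z) ^ p) (Icc m s) := by
  refine strictMonoOn_of_deriv_pos (convex_Icc m s)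
    (continuous_rpow_add_mul_sub_rpow (by linarith) c s).continuousOn fun z hz => ?_
  rw [interior_Icc] at hz
  have hlt : c * (s - z) ^ (p - 1) < z ^ (p - 1) := calc
    c * (s - z) ^ (p - 1) ≤ c * (s - m) ^ (p - 1) := mul_le_mul_of_nonneg_left
      (Real.rpow_le_rpow (sub_nonneg.2 hz.2.le) (sub_le_sub_left hz.1.le s) (sub_pos.2 hp).le) hc
    _ = m ^ (p - 1) := hcrit.symm
    _ < z ^ (p - 1) := Real.rpow_lt_rpow hm hz.1 (sub_pos.2 hp)
  rw [(hasDerivAt_rpow_add_mul_sub_rpow hp.le c s z).deriv]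
  exact mul_pos (by linarith) (sub_pos.2 hlt)

theorem existsUnique_rpow_add_mul_sub_rpow_eq (hp : 1 < p) (hc : 0 ≤ c) (hc₁ : c ≤ 1)
    (hms : m ≤ s) (hcrit : m ^ (p - 1) = c * (s - m) ^ (p - 1)) {y : ℝ} (hy : y ∈ Ioo 0 m) :
    ∃! w, w ∈ Ioo m s ∧ y ^ p + c * (s - y) ^ p = w ^ p + c * (s - w) ^ p := by
  have hp₀ : 0 < p := by linarith
  have hm : 0 ≤ m := (hy.1.trans hy.2).le
  have hends : (0 : ℝ) ^ p + c * (s - 0) ^ p ≤ s ^ p + c * (s - s) ^ p := by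
    simpa only [sub_zero, sub_self, Real.zero_rpow hp₀.ne', zero_add, mul_zero, add_zero] using
      mul_le_of_le_one_left (Real.rpow_nonneg (hm.trans hms) p) hc₁
  exact existsUnique_mem_Ioo_eq_of_strictAntiOn_of_strictMonoOn
    (strictAntiOn_rpow_add_mul_sub_rpow hp hc hms hcrit)
    (strictMonoOn_rpow_add_mul_sub_rpow hp hc hm hcrit)
    (continuous_rpow_add_mul_sub_rpow hp₀.le c s).continuousOn hms hends hy

end RpowAddMulSubRpow

section HolderConjugate

variable {p q a b : ℝ}

theorem rpow_one_div_eq_mul_rpow_neg_one_div (hpq : 1 / p + 1 / q = 1) (ha : 0 < a) :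
    a ^ (1 / p) = a * a ^ (-(1 / q)) := by
  rw [show 1 / p = 1 + -(1 / q) by linarith, Real.rpow_add ha, Real.rpow_one]

theorem rpow_one_div_mul_rpow (hpq : p.HolderConjugate q) (ha : 0 ≤ a) (hb : 0 ≤ b) :
    (a ^ (1 / q) * b) ^ p = a ^ (p - 1) * b ^ p := by
  rw [Real.mul_rpow (Real.rpow_nonneg ha _) hb, ← Real.rpow_mul ha, one_div_mul_eq_div,
    hpq.div_conj_eq_sub_one]

end HolderConjugate

theorem claim1_existence_uniqueness
    (p q t β : ℝ) (hp : 1 < p) (hpq : 1 / p + 1 / q = 1) (ht : 0 < t)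
    (hβ : β ∈ Set.Ico (1 / 2 : ℝ) 1)
    (y₀ y₁ : ℝ) (hy₀ : y₀ = t * (1 - β) ^ (1 / p)) (hy₁ : y₁ = t * (1 - β) ^ (-(1 / q)))
    (x : ℝ → ℝ) (hx : ∀ z, x z = (β⁻¹ - 1) ^ (1 / q) * (y₁ - z)) :
    ∀ y ∈ Set.Ioo (0 : ℝ) y₀,
      ∃! ty : ℝ, ty ∈ Set.Ioo y₀ y₁ ∧ y ^ p + x y ^ p = ty ^ p + x ty ^ p := by
  intro y hy
  have hβ₀ : 0 < β := by linarith [hβ.1]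
  have hk : 0 ≤ β⁻¹ - 1 := sub_nonneg.2 ((one_le_inv₀ hβ₀).2 hβ.2.le)
  have hk₁ : β⁻¹ - 1 ≤ 1 := by linarith [(inv_le_comm₀ hβ₀ two_pos).2 (one_div (2 : ℝ) ▸ hβ.1)]
  have hconj : p.HolderConjugate q := Real.holderConjugate_iff.2 ⟨hp, by simpa using hpq⟩
  have hy₀₁ : y₀ = (1 - β) * y₁ := by
    rw [hy₀, hy₁, rpow_one_div_eq_mul_rpow_neg_one_div hpq (sub_pos.2 hβ.2), mul_left_comm]
  have hy₁pos : 0 < y₁ := hy₁ ▸ mul_pos ht (Real.rpow_pos_of_pos (sub_pos.2 hβ.2) _)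
  have hle : y₀ ≤ y₁ := hy₀₁ ▸ mul_le_of_le_one_left hy₁pos.le (by linarith)
  have hbalance : y₀ = (β⁻¹ - 1) * (y₁ - y₀) := by rw [hy₀₁]; field_simp; ring
  have hcrit : y₀ ^ (p - 1) = (β⁻¹ - 1) ^ (p - 1) * (y₁ - y₀) ^ (p - 1) := by
    rw [← Real.mul_rpow hk (sub_nonneg.2 hle), ← hbalance]
  have hxp : ∀ z ≤ y₁, x z ^ p = (β⁻¹ - 1) ^ (p - 1) * (y₁ - z) ^ p := fun z hz => by
    rw [hx, rpow_one_div_mul_rpow hconj hk (sub_nonneg.2 hz)]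
  refine (existsUnique_congr fun w => and_congr_right fun hw => ?_).mpr <|
    existsUnique_rpow_add_mul_sub_rpow_eq hp (Real.rpow_nonneg hk _)
      (Real.rpow_le_one hk hk₁ (sub_pos.2 hp).le) hle hcrit hy
  rw [hxp y (hy.2.le.trans hle), hxp w hw.2.le]
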